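/- Let n ≥ 1 be a natural number. Let m₀, …, m_n be positive reals, Q₀, …, Q_{n−1} reals with Q_k > 1, and z⁻₀, …, z⁻_n and z⁺₀, …, z⁺_{n−1} positive reals satisfying the jump relations m_{k+1}·z⁺_k = Q_k·m_k·z⁻_k for 0 ≤ k ≤ n−1. Let u₀, …, u_n be reals satisfying the forward characteristic relations u_{k+1} + m_{k+1}·z⁻_{k+1} = u_k + m_{k+1}·z⁺_k for 0 ≤ k ≤ n−1. Then u_n − u₀ > −m_n·z⁻_n + m₀·z⁻₀. -/

import Mathlib

/-!
Just before the `k`-th jump the Riemann invariant `s = u + m z` has the value `u_k + m_k z⁻_k`.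
Crossing the jump leaves `u` unchanged and multiplies `m z > 0` by `Q_k > 1`, so `s` increases;
up to the next jump `s` is constant. Hence the values of `s` just before the jumps increase.
-/

theorem strictMonoOn_Iic_add_of_lt_of_add_eq {G : Type*} [Add G] [Preorder G] [AddLeftStrictMono G]
    {n : ℕ} {u a b : ℕ → G} (hlt : ∀ k < n, a k < b k)
    (heq : ∀ k < n, u (k + 1) + a (k + 1) = u k + b k) :
    StrictMonoOn (fun k ↦ u k + a k) (Set.Iic n) := by
  refine strictMonoOn_Iic_of_lt_succ fun k hk ↦ ?_
  calc
    u k + a k < u k + b k := by gcongr; exact hlt k hk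
    _ = u (k + 1) + a (k + 1) := (heq k hk).symm

theorem forward_characteristic_estimate_general {R : Type*} [Ring R] [PartialOrder R]
    [IsStrictOrderedRing R] {n : ℕ} (hn : 1 ≤ n) {m zminus zplus Q u : ℕ → R}
    (hpos : ∀ k < n, 0 < m k * zminus k) (hQ : ∀ k < n, 1 < Q k)
    (hjump : ∀ k < n, m (k + 1) * zplus k = Q k * (m k * zminus k))
    (hchar : ∀ k < n, u (k + 1) + m (k + 1) * zminus (k + 1) = u k + m (k + 1) * zplus k) :
    u n - u 0 > -(m n * zminus n) + m 0 * zminus 0 := by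
  have jump_lt (k : ℕ) (hk : k < n) : m k * zminus k < m (k + 1) * zplus k :=
    (lt_mul_of_one_lt_left (hpos k hk) (hQ k hk)).trans_eq (hjump k hk).symm
  have invariant_lt : u 0 + m 0 * zminus 0 < u n + m n * zminus n :=
    strictMonoOn_Iic_add_of_lt_of_add_eq jump_lt hchar n.zero_le Set.self_mem_Iic hn
  rwa [gt_iff_lt, neg_add_lt_iff_lt_add, ← add_sub_assoc, lt_sub_iff_add_lt', add_comm (m n * _)]

/-- Telescoping estimate along a forward characteristic crossing `n` increasing
entropy jumps: `u_n − u₀ > −m_n·z⁻_n + m₀·z⁻₀`. -/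
theorem forward_characteristic_estimate (n : ℕ) (hn : 1 ≤ n)
    (m zminus zplus : ℕ → ℝ) (Q : ℕ → ℝ) (u : ℕ → ℝ)
    (hm : ∀ k ≤ n, 0 < m k)
    (hQ : ∀ k < n, 1 < Q k)
    (hzminus : ∀ k ≤ n, 0 < zminus k)
    (hzplus : ∀ k < n, 0 < zplus k)
    (hjump : ∀ k < n, m (k + 1) * zplus k = Q k * (m k * zminus k))
    (hchar : ∀ k < n, u (k + 1) + m (k + 1) * zminus (k + 1) = u k + m (k + 1) * zplus k) :
    u n - u 0 > -(m n * zminus n) + m 0 * zminus 0 :=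
  forward_characteristic_estimate_general hn
    (fun k hk ↦ mul_pos (hm k hk.le) (hzminus k hk.le)) hQ hjump hchar
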